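/- arXiv:2509.24598 — 2 statements merged into one kernel-verified Lean document; each statement's English description precedes it below -/
import Mathlib

section
/- Let A ∈ ℝ^{n×n}, B ∈ ℝ^{n×m}, Q ∈ ℝ^{n×n} symmetric, γ > 0, μ ≥ 1, and let P ∈ ℝ^{n×n} be a symmetric positive semidefinite matrix satisfying P = Q + μ²AᵀPA − μ⁴AᵀPB(γI_m + μ²BᵀPB)⁻¹BᵀPA. Define H₁₂ = μ²AᵀPB, H₂₂ = γI_m + μ²BᵀPB, and K = H₂₂⁻¹H₁₂ᵀ. Let c ∈ ℝ, λ ∈ ℂ, β ∈ ℝ, and suppose 1 − 2c·Re λ + c²|λ|² ≤ β². Then, with M = μ·A − μcλ·BK (a complex n×n matrix), the Hermitian matrix P − Mᴴ P M − (Q − β²·H₁₂H₂₂⁻¹H₁₂ᵀ) is positive semidefinite (all real matrices regarded as complex matrices entrywise). -/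
open Matrix ComplexOrder

/-!
Absorbing the discount `μ` into `A` and `B` turns the hypothesis into an undiscounted Riccati
equation with input weight `W = γI`, and `M` into `A - z • (B * K)` with `z = cλ`. The gain equation
`H₂₂K = BᴴPA` makes every cross term of `MᴴPM` equal to `S = H₁₂K = KᴴH₂₂K`, and `BᴴPB = H₂₂ - W`
evaluates its quadratic term. With the Riccati equation this yields
`P - MᴴPM - (Q - b • S) = (b - |1 - z|²) • KᴴH₂₂K + |z|² • KᴴWK`,
whose two summands are positive semidefinite once `|1 - z|² ≤ b`; here
`|1 - cλ|² = 1 - 2c Re λ + c²|λ|²`.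
-/

lemma conjTranspose_smul_mul_mul_smul {l m n R : Type*} [Fintype n] [CommRing R] [StarRing R]
    {a : R} (ha : IsSelfAdjoint a) (X : Matrix n l R) (P : Matrix n n R) (Y : Matrix n m R) :
    (a • X)ᴴ * P * (a • Y) = a ^ 2 • (Xᴴ * P * Y) := by
  simp only [conjTranspose_smul, ha.star_eq, Matrix.smul_mul, Matrix.mul_smul, smul_smul, sq]

open scoped MatrixOrder in
lemma posSemidef_map {n 𝕜 S : Type*} [Finite n] [RCLike 𝕜] [Ring S] [PartialOrder S] [StarRing S]
    [StarOrderedRing S] {X : Matrix n n 𝕜} (hX : X.PosSemidef) (f : 𝕜 →+* S)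
    (hf : Function.Semiconj f star star) : (X.map f).PosSemidef := by
  classical
  have := Fintype.ofFinite n
  obtain ⟨C, rfl⟩ := CStarAlgebra.nonneg_iff_eq_star_mul_self.mp hX.nonneg
  rw [star_eq_conjTranspose, Matrix.map_mul, conjTranspose_map f hf]
  exact posSemidef_conjTranspose_mul_self _

section Riccati

variable {m n R S : Type*} [Fintype n] [CommRing R] [StarRing R]

/-- The input block `H₂₂ = W + BᴴPB` of the Hessian of the Q-function, for input weight `W`. -/
def inputHessian (B : Matrix n m R) (W : Matrix m m R) (P : Matrix n n R) : Matrix m m R :=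
  W + Bᴴ * P * B

lemma inputHessian_smul {a : R} (ha : IsSelfAdjoint a) (B : Matrix n m R) (W : Matrix m m R)
    (P : Matrix n n R) : inputHessian (a • B) W P = W + a ^ 2 • (Bᴴ * P * B) := by
  rw [inputHessian, conjTranspose_smul_mul_mul_smul ha]

lemma inputHessian_map [CommRing S] [StarRing S] (B : Matrix n m R) (W : Matrix m m R)
    (P : Matrix n n R) (f : R →+* S) (hf : Function.Semiconj f star star) :
    (inputHessian B W P).map f = inputHessian (B.map f) (W.map f) (P.map f) := by
  simp [inputHessian, Matrix.map_add, conjTranspose_map f hf]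

lemma posDef_inputHessian [Finite m] [PartialOrder R] [StarOrderedRing R] {B : Matrix n m R}
    {W : Matrix m m R} {P : Matrix n n R} (hW : W.PosDef) (hP : P.PosSemidef) :
    (inputHessian B W P).PosDef :=
  hW.add_posSemidef (hP.conjTranspose_mul_mul_same B)

variable [Fintype m]

/-- `P` solves the discrete-time algebraic Riccati equation with dynamics `(A, B)` and weights
`(Q, W)`, and `K` is an associated gain. The gain is characterized by its normal equation instead of
`(W + BᴴPB)⁻¹`, so that a singular input Hessian is allowed. -/
structure IsRiccatiSolution (A : Matrix n n R) (B : Matrix n m R) (Q : Matrix n n R)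
    (W : Matrix m m R) (P : Matrix n n R) (K : Matrix m n R) : Prop where
  isHermitian : P.IsHermitian
  inputHessian_mul_gain : inputHessian B W P * K = Bᴴ * P * A
  riccati : P = Q + Aᴴ * P * A - Aᴴ * P * B * K

namespace IsRiccatiSolution

variable {A Q P : Matrix n n R} {B : Matrix n m R} {W : Matrix m m R} {K : Matrix m n R}

lemma of_discounted [DecidableEq m] {a : R} (ha : IsSelfAdjoint a) (hP : P.IsHermitian)
    (hH : IsUnit (W + a ^ 2 • (Bᴴ * P * B)).det)
    (hric : P = Q + a ^ 2 • (Aᴴ * P * A) -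
      a ^ 4 • (Aᴴ * P * B * (W + a ^ 2 • (Bᴴ * P * B))⁻¹ * (Bᴴ * P * A))) :
    IsRiccatiSolution (a • A) (a • B) Q W P
      ((W + a ^ 2 • (Bᴴ * P * B))⁻¹ * (a ^ 2 • (Aᴴ * P * B))ᴴ) := by
  have hcross : (a ^ 2 • (Aᴴ * P * B))ᴴ = a ^ 2 • (Bᴴ * P * A) := by
    simp [ha.star_eq, hP.eq, Matrix.mul_assoc]
  refine ⟨hP, ?_, ?_⟩
  · rw [inputHessian_smul ha, hcross, conjTranspose_smul_mul_mul_smul ha,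
      mul_nonsing_inv_cancel_left _ _ hH]
  · rw [hcross, conjTranspose_smul_mul_mul_smul ha, conjTranspose_smul_mul_mul_smul ha]
    simpa [smul_smul, ← pow_add, Matrix.mul_assoc] using hric

lemma map [CommRing S] [StarRing S] (h : IsRiccatiSolution A B Q W P K) (f : R →+* S)
    (hf : Function.Semiconj f star star) :
    IsRiccatiSolution (A.map f) (B.map f) (Q.map f) (W.map f) (P.map f) (K.map f) where
  isHermitian := h.isHermitian.map f hf
  inputHessian_mul_gain := by
    simpa [inputHessian_map _ _ _ f hf, conjTranspose_map f hf] using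
      congrArg (·.map f) h.inputHessian_mul_gain
  riccati := by
    simpa [Matrix.map_add, Matrix.map_sub, conjTranspose_map f hf] using
      congrArg (·.map f) h.riccati

lemma conjTranspose_gain_mul_inputHessian (h : IsRiccatiSolution A B Q W P K)
    (hW : W.IsHermitian) : Kᴴ * inputHessian B W P = Aᴴ * P * B := by
  have hH : (inputHessian B W P).IsHermitian :=
    hW.add (isHermitian_conjTranspose_mul_mul B h.isHermitian)
  simpa [hH.eq, h.isHermitian.eq, Matrix.mul_assoc] using
    congrArg conjTranspose h.inputHessian_mul_gain

lemma conjTranspose_gain_mul_mul_gain (h : IsRiccatiSolution A B Q W P K) (hW : W.IsHermitian) :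
    Kᴴ * (Bᴴ * P * B) * K = Aᴴ * P * B * K - Kᴴ * W * K := by
  rw [← h.conjTranspose_gain_mul_inputHessian hW, inputHessian, Matrix.mul_add, Matrix.add_mul,
    add_sub_cancel_left]

lemma conjTranspose_closedLoop_mul_mul_closedLoop (h : IsRiccatiSolution A B Q W P K)
    (hW : W.IsHermitian) (z : R) :
    (A - z • (B * K))ᴴ * P * (A - z • (B * K)) =
      Aᴴ * P * A + (star (1 - z) * (1 - z) - 1) • (Aᴴ * P * B * K) -
        (star z * z) • (Kᴴ * W * K) := by
  have hleft : Aᴴ * P * (B * K) = Aᴴ * P * B * K := (Matrix.mul_assoc _ _ _).symm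
  have hright : (B * K)ᴴ * P * A = Aᴴ * P * B * K := by
    rw [← h.conjTranspose_gain_mul_inputHessian hW, Matrix.mul_assoc Kᴴ, h.inputHessian_mul_gain,
      conjTranspose_mul]
    simp only [Matrix.mul_assoc]
  have hquad : (B * K)ᴴ * P * (B * K) = Aᴴ * P * B * K - Kᴴ * W * K := by
    rw [← h.conjTranspose_gain_mul_mul_gain hW, conjTranspose_mul]
    simp only [Matrix.mul_assoc]
  simp only [conjTranspose_sub, conjTranspose_smul, Matrix.sub_mul, Matrix.mul_sub, Matrix.smul_mul,
    Matrix.mul_smul, hleft, hright, hquad, star_sub, star_one]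
  module

lemma lyapunov_residual_eq (h : IsRiccatiSolution A B Q W P K) (hW : W.IsHermitian) (z b : R) :
    P - (A - z • (B * K))ᴴ * P * (A - z • (B * K)) - (Q - b • (Aᴴ * P * B * K)) =
      (b - star (1 - z) * (1 - z)) • (Kᴴ * inputHessian B W P * K) +
        (star z * z) • (Kᴴ * W * K) := by
  rw [h.conjTranspose_closedLoop_mul_mul_closedLoop hW, h.conjTranspose_gain_mul_inputHessian hW]
  nth_rw 1 [h.riccati]
  module

end IsRiccatiSolution

theorem lyapunov_qfunction_bound_general [PartialOrder R] [StarOrderedRing R]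
    {A Q P : Matrix n n R} {B : Matrix n m R} {W : Matrix m m R} {K : Matrix m n R}
    (h : IsRiccatiSolution A B Q W P K) (hW : W.PosSemidef)
    (hH : (inputHessian B W P).PosSemidef) {z b : R} (hz : star (1 - z) * (1 - z) ≤ b) :
    (P - (A - z • (B * K))ᴴ * P * (A - z • (B * K)) - (Q - b • (Aᴴ * P * B * K))).PosSemidef := by
  rw [h.lyapunov_residual_eq hW.isHermitian]
  exact ((hH.conjTranspose_mul_mul_same K).smul (sub_nonneg.2 hz)).add
    ((hW.conjTranspose_mul_mul_same K).smul (star_mul_self_nonneg z))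

end Riccati

lemma IsRiccatiSolution.posSemidef_residual_map {m n 𝕜 S : Type*} [Fintype m] [Fintype n] [RCLike 𝕜]
    [CommRing S] [PartialOrder S] [StarRing S] [StarOrderedRing S]
    {A Q P : Matrix n n 𝕜} {B : Matrix n m 𝕜} {W : Matrix m m 𝕜} {K : Matrix m n 𝕜}
    (h : IsRiccatiSolution A B Q W P K) (hW : W.PosSemidef)
    (hH : (inputHessian B W P).PosSemidef) (f : 𝕜 →+* S) (hf : Function.Semiconj f star star)
    {z : S} {b : 𝕜} (hz : star (1 - z) * (1 - z) ≤ f b) :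
    (P.map f -
      (A.map f - z • (B.map f * K.map f))ᴴ * P.map f * (A.map f - z • (B.map f * K.map f)) -
      (Q - b • (Aᴴ * P * B * K)).map f).PosSemidef := by
  have hres : (Q - b • (Aᴴ * P * B * K)).map f =
      Q.map f - f b • ((A.map f)ᴴ * P.map f * B.map f * K.map f) := by
    rw [Matrix.map_sub _ (map_sub f), Matrix.map_smulₛₗ _ f _ (map_mul f b)]
    simp only [Matrix.map_mul, conjTranspose_map f hf]
  rw [hres]
  exact lyapunov_qfunction_bound_general (h.map f hf) (posSemidef_map hW f hf)
    (inputHessian_map B W P f hf ▸ posSemidef_map hH f hf) hz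

lemma star_one_sub_ofReal_mul_mul_self (c : ℝ) (w : ℂ) :
    star (1 - c * w) * (1 - c * w) = ((1 - 2 * c * w.re + c ^ 2 * ‖w‖ ^ 2 : ℝ) : ℂ) := by
  rw [Complex.star_def, ← Complex.normSq_eq_conj_mul_self, Complex.sq_norm]
  simp only [Complex.normSq_sub, Complex.normSq_one, Complex.normSq_ofReal,
    one_mul, map_mul, Complex.conj_ofReal, Complex.re_ofReal_mul, Complex.conj_re]
  push_cast
  ring

lemma semiconj_ofReal_star : Function.Semiconj Complex.ofRealHom star star :=
  fun x ↦ (Complex.conj_ofReal x).symm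

lemma map_ofReal_smul {m n : Type*} (a : ℝ) (X : Matrix m n ℝ) :
    (a • X).map Complex.ofRealHom = (a : ℂ) • X.map Complex.ofRealHom :=
  Matrix.map_smulₛₗ _ Complex.ofRealHom _ (map_mul Complex.ofRealHom a) X

/-- The Lyapunov-type bound from the proof of Theorem 4: if
`1 − 2c·Re λ + c²|λ|² ≤ β²` then `P − MᴴPM ⪰ Q − β²·H₁₂H₂₂⁻¹H₁₂ᵀ`
with `M = μA − μcλ·BK`. -/
theorem lyapunov_qfunction_bound (n m : ℕ)
    (A : Matrix (Fin n) (Fin n) ℝ) (B : Matrix (Fin n) (Fin m) ℝ)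
    (Q : Matrix (Fin n) (Fin n) ℝ) (hQ : Q.IsSymm)
    (γ μ : ℝ) (hγ : 0 < γ) (hμ : 1 ≤ μ)
    (P : Matrix (Fin n) (Fin n) ℝ) (hP : P.PosSemidef)
    (hric : P = Q + μ ^ 2 • (Aᵀ * P * A) -
      μ ^ 4 • (Aᵀ * P * B *
        (γ • (1 : Matrix (Fin m) (Fin m) ℝ) + μ ^ 2 • (Bᵀ * P * B))⁻¹ * (Bᵀ * P * A)))
    (H₁₂ : Matrix (Fin n) (Fin m) ℝ) (hH₁₂ : H₁₂ = μ ^ 2 • (Aᵀ * P * B))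
    (H₂₂ : Matrix (Fin m) (Fin m) ℝ)
    (hH₂₂ : H₂₂ = γ • (1 : Matrix (Fin m) (Fin m) ℝ) + μ ^ 2 • (Bᵀ * P * B))
    (K : Matrix (Fin m) (Fin n) ℝ) (hK : K = H₂₂⁻¹ * H₁₂ᵀ)
    (c : ℝ) (lam : ℂ) (β : ℝ)
    (hβ : 1 - 2 * c * lam.re + c ^ 2 * ‖lam‖ ^ 2 ≤ β ^ 2) :
    ((P.map (Complex.ofReal ·)) -
      ((μ : ℂ) • A.map (Complex.ofReal ·) -
        ((μ : ℂ) * (c : ℂ) * lam) •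
          (B.map (Complex.ofReal ·) * K.map (Complex.ofReal ·)))ᴴ *
        (P.map (Complex.ofReal ·)) *
      ((μ : ℂ) • A.map (Complex.ofReal ·) -
        ((μ : ℂ) * (c : ℂ) * lam) •
          (B.map (Complex.ofReal ·) * K.map (Complex.ofReal ·))) -
      ((Q - β ^ 2 • (H₁₂ * H₂₂⁻¹ * H₁₂ᵀ)).map (Complex.ofReal ·))).PosSemidef := by
  have hμ' : IsSelfAdjoint μ := .all μ
  have hW : (γ • 1 : Matrix (Fin m) (Fin m) ℝ).PosDef := PosDef.one.smul hγ
  have hH : (inputHessian (μ • B) (γ • 1) P).PosDef := posDef_inputHessian hW hP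
  simp only [← conjTranspose_eq_transpose_of_trivial] at hric hH₁₂ hH₂₂ hK ⊢
  have hsol : IsRiccatiSolution (μ • A) (μ • B) Q (γ • 1) P K := by
    rw [hK, hH₁₂, hH₂₂]
    refine .of_discounted hμ' hP.isHermitian ?_ hric
    exact inputHessian_smul hμ' B _ P ▸ (isUnit_iff_isUnit_det _).1 hH.isUnit
  have hS : H₁₂ * H₂₂⁻¹ * H₁₂ᴴ = (μ • A)ᴴ * P * (μ • B) * K := by
    rw [hK, conjTranspose_smul_mul_mul_smul hμ', ← hH₁₂, Matrix.mul_assoc]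
  have hz : star (1 - c * lam) * (1 - c * lam) ≤ ((β ^ 2 : ℝ) : ℂ) := by
    rw [star_one_sub_ofReal_mul_mul_self]
    exact_mod_cast hβ
  have hpos := hsol.posSemidef_residual_map hW.posSemidef hH.posSemidef _ semiconj_ofReal_star hz
  rw [map_ofReal_smul, map_ofReal_smul, Matrix.smul_mul, smul_smul, mul_comm _ (μ : ℂ),
    ← mul_assoc] at hpos
  rwa [hS]
end

section
/- Let A ∈ ℝ^{n×n}, B ∈ ℝ^{n×m}, Q ∈ ℝ^{n×n} symmetric positive semidefinite, and let 0 < γ₁ < γ₂. Define two sequences of matrices by P_{γ₁}^{(0)} = P_{γ₂}^{(0)} = 0 and, for k ≥ 0, P_{γ}^{(k+1)} = AᵀP_{γ}^{(k)}A − AᵀP_{γ}^{(k)}B(γI_m + BᵀP_{γ}^{(k)}B)⁻¹BᵀP_{γ}^{(k)}A + Q for γ ∈ {γ₁, γ₂}. Then for every k ≥ 0, each P_{γ}^{(k)} is symmetric positive semidefinite and P_{γ₁}^{(k)} ⪯ P_{γ₂}^{(k)}. -/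
open Matrix

/-!
The one-step cost `(u, x) ↦ uᴴ R u + xᴴ Q x + (A x + B u)ᴴ P (A x + B u)` is a quadratic form whose
matrix is linear and monotone in `(Q, R, P)`. Minimizing over `u` leaves the quadratic form of the
Riccati update in `x`, so that update is the Schur complement of the `u`-block. When the `u`-block
of `M` is positive definite, its Schur complement is the largest `X` that can be subtracted from
the `x`-block while leaving `M` positive semidefinite, hence is monotone in `M`. The Riccati update
is therefore monotone in `(Q, R, P)`, and induction on the number of steps compares the iterates;
`R = γ • 1` gives monotonicity in `γ`.
-/

section BlockMatrix

variable {m n : Type*} [Finite n]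

theorem posSemidef_fromBlocks_zero_zero {R : Type*} [Ring R] [PartialOrder R] [StarRing R]
    [AddLeftMono R] [Finite m] {U : Matrix m m R} {V : Matrix n n R} (hU : U.PosSemidef)
    (hV : V.PosSemidef) : (fromBlocks U 0 0 V).PosSemidef := by
  have := Fintype.ofFinite m
  have := Fintype.ofFinite n
  refine .of_dotProduct_mulVec_nonneg
    (hU.isHermitian.fromBlocks conjTranspose_zero hV.isHermitian) fun x ↦ ?_
  simpa [fromBlocks_mulVec, dotProduct, Fintype.sum_sum_type] using
    add_nonneg (hU.dotProduct_mulVec_nonneg (x ∘ Sum.inl))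
      (hV.dotProduct_mulVec_nonneg (x ∘ Sum.inr))

theorem posSemidef_schurComplement_sub {𝕜 : Type*} [Field 𝕜] [PartialOrder 𝕜] [StarRing 𝕜]
    [StarOrderedRing 𝕜] [Fintype m] [DecidableEq m] {S₁ S₂ : Matrix m m 𝕜} {C₁ C₂ : Matrix m n 𝕜}
    {D₁ D₂ : Matrix n n 𝕜} (hS₁ : S₁.PosDef)
    (h : (fromBlocks S₂ C₂ C₂ᴴ D₂ - fromBlocks S₁ C₁ C₁ᴴ D₁).PosSemidef) :
    ((D₂ - C₂ᴴ * S₂⁻¹ * C₂) - (D₁ - C₁ᴴ * S₁⁻¹ * C₁)).PosSemidef := by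
  have hS₂ : S₂.PosDef := by
    have hS : (S₂ - S₁).PosSemidef := h.submatrix Sum.inl
    simpa using hS₁.add_posSemidef hS
  let _ := hS₁.isUnit.invertible
  let _ := hS₂.isUnit.invertible
  set X := D₁ - C₁ᴴ * S₁⁻¹ * C₁ with hX
  have h₁ : (fromBlocks S₁ C₁ C₁ᴴ (D₁ - X)).PosSemidef := by
    rw [hS₁.fromBlocks₁₁, hX, sub_sub_cancel, sub_self]
    exact .zero
  have h₂ : (fromBlocks S₂ C₂ C₂ᴴ (D₂ - X)).PosSemidef := by
    convert h.add h₁ using 1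
    simp [sub_eq_add_neg, fromBlocks_neg, fromBlocks_add, add_assoc]
  rw [sub_right_comm]
  exact (hS₂.fromBlocks₁₁ C₂ (D₂ - X)).1 h₂

end BlockMatrix

section RiccatiMap

variable {α l m n : Type*} [CommRing α] [StarRing α] [Fintype n]

/-- The update of the discrete-time Riccati recursion for the dynamics `x ↦ A x + B u`, with state
cost `Q`, control cost `R` and cost-to-go `P`. The state space may change in the step, so `A` is
allowed to be rectangular. -/
noncomputable def riccatiMap [Fintype m] [DecidableEq m] (A : Matrix n l α)
    (B : Matrix n m α) (Q : Matrix l l α) (R : Matrix m m α) (P : Matrix n n α) : Matrix l l α :=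
  Aᴴ * P * A - Aᴴ * P * B * (R + Bᴴ * P * B)⁻¹ * Bᴴ * P * A + Q

/-- The matrix of the one-step cost `uᴴ R u + xᴴ Q x + (A x + B u)ᴴ P (A x + B u)` as a quadratic
form in the pair `(u, x)`. The control comes first, so that it is the block eliminated by the Schur
complement of the upper left corner. -/
def stageCost (A : Matrix n l α) (B : Matrix n m α) (Q : Matrix l l α) (R : Matrix m m α)
    (P : Matrix n n α) : Matrix (m ⊕ l) (m ⊕ l) α :=
  fromBlocks R 0 0 Q + (fromCols B A)ᴴ * P * fromCols B A

variable (A : Matrix n l α) (B : Matrix n m α)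

theorem stageCost_sub (Q₁ Q₂ : Matrix l l α) (R₁ R₂ : Matrix m m α) (P₁ P₂ : Matrix n n α) :
    stageCost A B Q₂ R₂ P₂ - stageCost A B Q₁ R₁ P₁ =
      stageCost A B (Q₂ - Q₁) (R₂ - R₁) (P₂ - P₁) := by
  have hdiag : fromBlocks (R₂ - R₁) 0 0 (Q₂ - Q₁) =
      fromBlocks R₂ 0 0 Q₂ - fromBlocks R₁ 0 0 Q₁ := by
    simp [sub_eq_add_neg, fromBlocks_neg, fromBlocks_add]
  simp only [stageCost, hdiag, Matrix.mul_sub, Matrix.sub_mul]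
  abel

theorem stageCost_eq_fromBlocks (Q : Matrix l l α) (R : Matrix m m α) {P : Matrix n n α}
    (hP : P.IsHermitian) :
    stageCost A B Q R P =
      fromBlocks (R + Bᴴ * P * B) (Bᴴ * P * A) (Bᴴ * P * A)ᴴ (Aᴴ * P * A + Q) := by
  simp [stageCost, conjTranspose_fromCols_eq_fromRows_conjTranspose, fromRows_mul,
    fromBlocks_add, hP.eq, Matrix.mul_assoc, add_comm Q]

theorem riccatiMap_eq_schurComplement [Fintype m] [DecidableEq m] (Q : Matrix l l α)
    (R : Matrix m m α) {P : Matrix n n α} (hP : P.IsHermitian) :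
    riccatiMap A B Q R P =
      (Aᴴ * P * A + Q) - (Bᴴ * P * A)ᴴ * (R + Bᴴ * P * B)⁻¹ * (Bᴴ * P * A) := by
  simp [riccatiMap, hP.eq, Matrix.mul_assoc, sub_add_eq_add_sub]

theorem riccatiMap_zero [Fintype m] [DecidableEq m] (Q : Matrix l l α) (R : Matrix m m α) :
    riccatiMap A B Q R 0 = Q := by
  simp [riccatiMap]

theorem posSemidef_stageCost [PartialOrder α] [AddLeftMono α] [Finite l] [Finite m]
    {Q : Matrix l l α} {R : Matrix m m α} {P : Matrix n n α} (hQ : Q.PosSemidef)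
    (hR : R.PosSemidef) (hP : P.PosSemidef) : (stageCost A B Q R P).PosSemidef :=
  (posSemidef_fromBlocks_zero_zero hR hQ).add (hP.conjTranspose_mul_mul_same (fromCols B A))

end RiccatiMap

section Monotonicity

variable {𝕜 l m n : Type*} [Field 𝕜] [PartialOrder 𝕜] [StarRing 𝕜] [StarOrderedRing 𝕜]
  [Finite l] [Fintype m] [DecidableEq m] [Fintype n] (A : Matrix n l 𝕜) (B : Matrix n m 𝕜)
  {Q Q₁ Q₂ : Matrix l l 𝕜} {R R₁ R₂ : Matrix m m 𝕜} {P P₁ P₂ : Matrix n n 𝕜}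

theorem posSemidef_riccatiMap_sub (hQ : (Q₂ - Q₁).PosSemidef) (hR₁ : R₁.PosDef)
    (hR : (R₂ - R₁).PosSemidef) (hP₁ : P₁.PosSemidef) (hP : (P₂ - P₁).PosSemidef) :
    (riccatiMap A B Q₂ R₂ P₂ - riccatiMap A B Q₁ R₁ P₁).PosSemidef := by
  have hP₂ : P₂.PosSemidef := by simpa using hP₁.add hP
  have hcost := posSemidef_stageCost A B hQ hR hP
  rw [← stageCost_sub, stageCost_eq_fromBlocks A B Q₁ R₁ hP₁.isHermitian,
    stageCost_eq_fromBlocks A B Q₂ R₂ hP₂.isHermitian] at hcost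
  rw [riccatiMap_eq_schurComplement A B Q₁ R₁ hP₁.isHermitian,
    riccatiMap_eq_schurComplement A B Q₂ R₂ hP₂.isHermitian]
  exact posSemidef_schurComplement_sub
    (hR₁.add_posSemidef (hP₁.conjTranspose_mul_mul_same B)) hcost

theorem posSemidef_riccatiMap (hQ : Q.PosSemidef) (hR : R.PosDef) (hP : P.PosSemidef) :
    (riccatiMap A B Q R P).PosSemidef := by
  have hsub : (riccatiMap A B Q R P - riccatiMap A B Q R 0).PosSemidef :=
    posSemidef_riccatiMap_sub A B (by simpa using .zero) hR (by simpa using .zero) .zero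
      (by simpa using hP)
  rw [riccatiMap_zero] at hsub
  simpa using hsub.add hQ

end Monotonicity

theorem riccati_iterates_monotone_in_gamma_general {𝕜 m n : Type*} [Field 𝕜] [PartialOrder 𝕜]
    [StarRing 𝕜] [StarOrderedRing 𝕜] [Fintype m] [DecidableEq m] [Fintype n]
    (A : Matrix n n 𝕜) (B : Matrix n m 𝕜) {Q₁ Q₂ : Matrix n n 𝕜} {R₁ R₂ : Matrix m m 𝕜}
    (hQ₁ : Q₁.PosSemidef) (hQ : (Q₂ - Q₁).PosSemidef)
    (hR₁ : R₁.PosDef) (hR : (R₂ - R₁).PosSemidef) {P₁ P₂ : ℕ → Matrix n n 𝕜}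
    (hP₁_zero : (P₁ 0).PosSemidef) (hP_zero : (P₂ 0 - P₁ 0).PosSemidef)
    (hP₁_succ : ∀ k, P₁ (k + 1) = riccatiMap A B Q₁ R₁ (P₁ k))
    (hP₂_succ : ∀ k, P₂ (k + 1) = riccatiMap A B Q₂ R₂ (P₂ k)) (k : ℕ) :
    (P₁ k).PosSemidef ∧ (P₂ k).PosSemidef ∧ (P₂ k - P₁ k).PosSemidef := by
  have hP₁ : ∀ k, (P₁ k).PosSemidef := fun k ↦ by
    induction k with
    | zero => exact hP₁_zero
    | succ k ih => exact hP₁_succ k ▸ posSemidef_riccatiMap A B hQ₁ hR₁ ih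
  have hP : ∀ k, (P₂ k - P₁ k).PosSemidef := fun k ↦ by
    induction k with
    | zero => exact hP_zero
    | succ k ih =>
      rw [hP₁_succ, hP₂_succ]
      exact posSemidef_riccatiMap_sub A B hQ hR₁ hR (hP₁ k) ih
  exact ⟨hP₁ k, by simpa using (hP₁ k).add (hP k), hP k⟩

/-- Monotone comparison of two Riccati iterations (Theorem 7, Step 1): starting
from `0`, the iterates for `γ₁ < γ₂` are PSD and ordered `P_{γ₁}^{(k)} ⪯ P_{γ₂}^{(k)}`. -/
theorem riccati_iterates_monotone_in_gamma (n m : ℕ)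
    (A : Matrix (Fin n) (Fin n) ℝ) (B : Matrix (Fin n) (Fin m) ℝ)
    (Q : Matrix (Fin n) (Fin n) ℝ) (hQ : Q.PosSemidef)
    (γ₁ γ₂ : ℝ) (hγ₁ : 0 < γ₁) (hγ : γ₁ < γ₂)
    (P1 P2 : ℕ → Matrix (Fin n) (Fin n) ℝ)
    (hP10 : P1 0 = 0) (hP20 : P2 0 = 0)
    (hP1 : ∀ k, P1 (k + 1) = Aᵀ * P1 k * A -
      Aᵀ * P1 k * B * (γ₁ • (1 : Matrix (Fin m) (Fin m) ℝ) + Bᵀ * P1 k * B)⁻¹ * Bᵀ * P1 k * A + Q)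
    (hP2 : ∀ k, P2 (k + 1) = Aᵀ * P2 k * A -
      Aᵀ * P2 k * B * (γ₂ • (1 : Matrix (Fin m) (Fin m) ℝ) + Bᵀ * P2 k * B)⁻¹ * Bᵀ * P2 k * A + Q) :
    ∀ k, (P1 k).PosSemidef ∧ (P2 k).PosSemidef ∧ (P2 k - P1 k).PosSemidef := by
  have hR : (γ₂ • (1 : Matrix (Fin m) (Fin m) ℝ) - γ₁ • 1).PosSemidef :=
    sub_smul γ₂ γ₁ (1 : Matrix (Fin m) (Fin m) ℝ) ▸ PosSemidef.one.smul (sub_nonneg.2 hγ.le)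
  exact riccati_iterates_monotone_in_gamma_general A B (Q₂ := Q) hQ (by simpa using .zero)
    (PosDef.one.smul hγ₁) hR (by simpa only [hP10] using .zero)
    (by simpa only [hP10, hP20, sub_self] using .zero)
    (by simpa only [riccatiMap, conjTranspose_eq_transpose_of_trivial] using hP1)
    (by simpa only [riccatiMap, conjTranspose_eq_transpose_of_trivial] using hP2)
end
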